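/- Second fundamental theorem of FC for the 1st level general fractional derivative: let (κ, k₁, k₂) ∈ L₁¹ and f ∈ C¹_{-1,(k₂)}(0,∞). Then for all t > 0, (κ * ( 1L D_{(k₁,k₂)} f))(t) = f(t) − (k₂ * f)(0) · (k₁ * κ)(t), where (k₂ * f)(0) = lim_{s→0+} (k₂ * f)(s). -/

import Mathlib

open Real Filter MeasureTheory intervalIntegral

/-- The Laplace convolution `(f * g)(t) = ∫_0^t f(t-τ) g(τ) dτ`. -/
noncomputable def lconv (f g : ℝ → ℝ) : ℝ → ℝ :=
  fun t => ∫ τ in (0:ℝ)..t, f (t - τ) * g τ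

/-- The space `C_{-1}(0,∞)`: functions representable as `t^p f₁(t)` with `p > -1`
and `f₁` continuous on `[0,∞)`. -/
def CMinusOne (f : ℝ → ℝ) : Prop :=
  ∃ p : ℝ, p > -1 ∧ ∃ f₁ : ℝ → ℝ, ContinuousOn f₁ (Set.Ici 0) ∧
    ∀ t > (0:ℝ), f t = t ^ p * f₁ t


/-- The class `L₁¹` of triples of 1st level kernels: `κ, k₁, k₂ ∈ C_{-1}(0,∞)` with
`(κ * k₁ * k₂)(t) = 1` for all `t > 0`. -/
def FirstLevelKernels (κ k₁ k₂ : ℝ → ℝ) : Prop :=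
  CMinusOne κ ∧ CMinusOne k₁ ∧ CMinusOne k₂ ∧ ∀ t > (0:ℝ), lconv κ (lconv k₁ k₂) t = 1

/-!
A triple of 1st level kernels gives a Sonine pair `(κ * k₁, k₂)`, so the claim is
`K * (k * f)' = f - c K` for `K * k = 1`. Integrating, `k * f = c + 1 * (k * f)'`; convolving with
`K` turns this into `1 * f = 1 * (c K + K * (k * f)')`, and differentiating removes the leading `1`.
Nothing here depends on power-type singularities: all that is needed of `C_{-1}(0,∞)` is that its
members are continuous on `(0,∞)` and integrable at the origin, and this larger class is
a commutative convolution algebra too.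
-/

open Set Topology

variable {f g h k K : ℝ → ℝ} {c t : ℝ}

theorem lconv_comm (f g : ℝ → ℝ) : lconv f g = lconv g f := by
  ext t
  have reflect := integral_comp_sub_left (a := 0) (b := t) (fun τ => f τ * g (t - τ)) t
  simpa only [lconv, sub_self, sub_zero, sub_sub_cancel, mul_comm (f _)] using reflect

theorem lconv_congr {f' g' : ℝ → ℝ} (hf : EqOn f f' (Ioo 0 t)) (hg : EqOn g g' (Ioo 0 t))
    (ht : 0 ≤ t) : lconv f g t = lconv f' g' t := by
  simp only [lconv, integral_of_le ht, integral_Ioc_eq_integral_Ioo]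
  refine setIntegral_congr_fun measurableSet_Ioo fun τ hτ => ?_
  simp only [hg hτ, hf ⟨sub_pos.2 hτ.2, sub_lt_self t hτ.1⟩]

theorem lconv_const_smul (c : ℝ) (f g : ℝ → ℝ) : lconv f (c • g) = c • lconv f g := by
  ext t
  simp only [lconv, Pi.smul_apply, smul_eq_mul, mul_left_comm _ c,
    intervalIntegral.integral_const_mul]

theorem lconv_one_left (f : ℝ → ℝ) (t : ℝ) : lconv 1 f t = ∫ τ in (0 : ℝ)..t, f τ := by
  simp only [lconv, Pi.one_apply, one_mul]

theorem indicator_lconv (f g : ℝ → ℝ) :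
    (Ioi 0).indicator (lconv f g) =
      convolution ((Ioi 0).indicator f) ((Ioi 0).indicator g)
        (ContinuousLinearMap.mul ℝ ℝ) volume := by
  rw [← posConvolution_eq_convolution_indicator _ _ _ volume, posConvolution, lconv_comm]
  unfold lconv
  simp only [ContinuousLinearMap.mul_apply', mul_comm]

theorem hasDerivAt_lconv_one (hf : ContinuousOn f (Ioi 0)) (hfi : IntervalIntegrable f volume 0 t)
    (ht : 0 < t) : HasDerivAt (lconv 1 f) (f t) t := by
  simp only [funext (lconv_one_left f)]
  exact integral_hasDerivAt_right hfi (hf.stronglyMeasurableAtFilter isOpen_Ioi t ht)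
    (hf.continuousAt (Ioi_mem_nhds ht))

theorem lconv_one_deriv (hdiff : ∀ s > (0 : ℝ), DifferentiableAt ℝ f s)
    (hint : IntervalIntegrable (deriv f) volume 0 t) (hlim : Tendsto f (𝓝[>] 0) (𝓝 c))
    (ht : 0 < t) : lconv 1 (deriv f) t = f t - c := by
  rw [lconv_one_left]
  exact integral_eq_sub_of_hasDerivAt_of_tendsto ht (fun s hs => (hdiff s hs.1).hasDerivAt) hint
    hlim ((hdiff t ht).continuousAt.tendsto.mono_left nhdsWithin_le_nhds)

/-- The half of the Laplace convolution in which only `g` is evaluated near the origin. -/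
noncomputable def halfLconv (f g : ℝ → ℝ) (t : ℝ) : ℝ :=
  ∫ τ in (0 : ℝ)..t / 2, f (t - τ) * g τ

theorem intervalIntegrable_comp_sub_mul_of_lt {a : ℝ} (hf : ContinuousOn f (Ioi 0))
    (hg : IntervalIntegrable g volume 0 a) (ha : 0 ≤ a) (hat : a < t) :
    IntervalIntegrable (fun τ => f (t - τ) * g τ) volume 0 a := by
  refine hg.continuousOn_mul (hf.comp (by fun_prop) fun τ hτ => ?_)
  rw [uIcc_of_le ha] at hτ
  exact sub_pos.2 (hτ.2.trans_lt hat)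

theorem continuousAt_indicator_Iic {X : Type*} [TopologicalSpace X] {a : X → ℝ}
    {φ : X → ℝ → ℝ} {x : X} {τ : ℝ} (ha : ContinuousAt a x) (hτ : τ ≠ a x)
    (hφ : τ < a x → ContinuousAt (fun y => φ y τ) x) :
    ContinuousAt (fun y => (Iic (a y)).indicator (φ y) τ) x := by
  rcases hτ.lt_or_gt with hlt | hgt
  · refine (hφ hlt).congr ?_
    filter_upwards [ha.eventually_const_lt hlt] with y hy
    exact (indicator_of_mem (mem_Iic.2 hy.le) _).symm
  · refine (continuousAt_const (y := 0)).congr ?_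
    filter_upwards [ha.eventually_lt_const hgt] with y hy
    exact (indicator_of_notMem (mt mem_Iic.1 hy.not_ge) _).symm

theorem continuousAt_halfLconv (hf : ContinuousOn f (Ioi 0))
    (hg : IntervalIntegrable g volume 0 t) (ht : 0 < t) : ContinuousAt (halfLconv f g) t := by
  have hnear : ∀ᶠ s in 𝓝 t, s ∈ Ioo (t / 2) (2 * t) :=
    Ioo_mem_nhds (half_lt_self ht) (by linarith)
  -- The indicator trades the moving endpoint for a jump, which only `τ = t / 2` feels in the limit.
  have heq : (fun s => ∫ τ in (0 : ℝ)..t, (Iic (s / 2)).indicator (fun τ => f (s - τ) * g τ) τ)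
      =ᶠ[𝓝 t] halfLconv f g := by
    filter_upwards [hnear] with s ⟨hts, hst⟩
    exact intervalIntegral.integral_indicator ⟨by linarith, by linarith⟩
  obtain ⟨M, hM⟩ := (isCompact_Icc (a := t / 4) (b := 2 * t)).exists_bound_of_continuousOn
    (hf.mono fun s hs => (by linarith [hs.1] : (0 : ℝ) < s))
  have hM0 : 0 ≤ M := (norm_nonneg _).trans (hM t ⟨by linarith, by linarith⟩)
  refine (continuousAt_of_dominated_interval (bound := fun τ => M * ‖g τ‖) ?measurable ?bound
    (hg.norm.const_mul M) ?continuous).congr heq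
  all_goals rw [uIoc_of_le ht.le]
  case measurable =>
    filter_upwards [hnear] with s ⟨hts, hst⟩
    have hgs : IntervalIntegrable g volume 0 (s / 2) :=
      hg.mono_set (uIcc_subset_uIcc_left (mem_uIcc_of_le (by linarith) (by linarith)))
    have hfg := intervalIntegrable_comp_sub_mul_of_lt hf hgs (by linarith) (by linarith : s / 2 < s)
    refine (aestronglyMeasurable_indicator_iff measurableSet_Iic).2 ?_
    rw [Measure.restrict_restrict measurableSet_Iic, Iic_inter_Ioc_of_le (by linarith)]
    exact hfg.1.aestronglyMeasurable
  case bound =>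
    filter_upwards [hnear] with s ⟨hts, hst⟩
    refine .of_forall fun τ ⟨hτ0, _⟩ => ?_
    by_cases hτ : τ ≤ s / 2
    · rw [indicator_of_mem (mem_Iic.2 hτ), norm_mul]
      gcongr
      exact hM _ ⟨by linarith, by linarith⟩
    · rw [indicator_of_notMem (mt mem_Iic.1 hτ), norm_zero]
      positivity
  case continuous =>
    filter_upwards [Measure.ae_ne volume (t / 2)] with τ hτ _
    refine continuousAt_indicator_Iic (by fun_prop) hτ fun hlt => ?_
    have hft : ContinuousAt f (t - τ) := hf.continuousAt (Ioi_mem_nhds (by linarith))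
    exact (hft.comp (f := fun s => s - τ) (by fun_prop)).mul continuousAt_const

/-- The class of functions to which the second fundamental theorem is extended: continuous on
`(0,∞)` and integrable near the origin. Values outside `(0,∞)` are irrelevant. It contains
`C_{-1}(0,∞)` and, like it, is closed under Laplace convolution. -/
structure ContinuousIntegrable (f : ℝ → ℝ) : Prop where
  continuousOn : ContinuousOn f (Ioi 0)
  intervalIntegrable : ∀ t > 0, IntervalIntegrable f volume 0 t

theorem CMinusOne.continuousIntegrable (hf : CMinusOne f) : ContinuousIntegrable f := by
  obtain ⟨p, hp, φ, hφ, hfφ⟩ := hf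
  constructor
  · refine ContinuousOn.congr (ContinuousOn.mul ?_ (hφ.mono Ioi_subset_Ici_self)) hfφ
    exact continuousOn_id.rpow_const fun s hs => Or.inl (ne_of_gt hs)
  · intro t ht
    have hint : IntervalIntegrable (fun s => s ^ p * φ s) volume 0 t :=
      (intervalIntegrable_rpow' hp).mul_continuousOn
        (hφ.mono (by rw [uIcc_of_le ht.le]; exact Icc_subset_Ici_self))
    refine hint.congr fun s hs => ?_
    rw [uIoc_of_le ht.le] at hs
    exact (hfφ s hs.1).symm

namespace ContinuousIntegrable

protected theorem one : ContinuousIntegrable 1 :=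
  ⟨continuousOn_const, fun _ _ => intervalIntegrable_const⟩

protected theorem norm (hf : ContinuousIntegrable f) : ContinuousIntegrable fun t => ‖f t‖ :=
  ⟨hf.continuousOn.norm, fun t ht => (hf.intervalIntegrable t ht).norm⟩

protected theorem add (hf : ContinuousIntegrable f) (hg : ContinuousIntegrable g) :
    ContinuousIntegrable (f + g) :=
  ⟨hf.continuousOn.add hg.continuousOn,
    fun t ht => (hf.intervalIntegrable t ht).add (hg.intervalIntegrable t ht)⟩

protected theorem const_smul (hf : ContinuousIntegrable f) (c : ℝ) :
    ContinuousIntegrable (c • f) :=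
  ⟨hf.continuousOn.const_smul c, fun t ht => (hf.intervalIntegrable t ht).smul c⟩

theorem aestronglyMeasurable_indicator (hf : ContinuousIntegrable f) :
    AEStronglyMeasurable ((Ioi 0).indicator f) volume :=
  (aestronglyMeasurable_indicator_iff measurableSet_Ioi).2
    (hf.continuousOn.aestronglyMeasurable measurableSet_Ioi)

theorem intervalIntegrable_left_half (hf : ContinuousIntegrable f) (hg : ContinuousIntegrable g)
    (ht : 0 < t) : IntervalIntegrable (fun τ => f (t - τ) * g τ) volume 0 (t / 2) :=
  intervalIntegrable_comp_sub_mul_of_lt hf.continuousOn (hg.intervalIntegrable _ (half_pos ht))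
    (half_pos ht).le (half_lt_self ht)

theorem intervalIntegrable_right_half (hf : ContinuousIntegrable f) (hg : ContinuousIntegrable g)
    (ht : 0 < t) : IntervalIntegrable (fun τ => f (t - τ) * g τ) volume (t / 2) t := by
  simpa [mul_comm, sub_half] using ((intervalIntegrable_left_half hg hf ht).comp_sub_left t).symm

theorem intervalIntegrable_comp_sub_mul (hf : ContinuousIntegrable f)
    (hg : ContinuousIntegrable g) (ht : 0 < t) :
    IntervalIntegrable (fun τ => f (t - τ) * g τ) volume 0 t :=
  (hf.intervalIntegrable_left_half hg ht).trans (hf.intervalIntegrable_right_half hg ht)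

theorem lconv_eq_halfLconv_add (hf : ContinuousIntegrable f) (hg : ContinuousIntegrable g)
    (ht : 0 < t) : lconv f g t = halfLconv f g t + halfLconv g f t := by
  have reflect := integral_comp_sub_left (a := 0) (b := t / 2) (fun τ => f (t - τ) * g τ) t
  simp only [sub_sub_cancel, sub_zero, sub_half, mul_comm (f _)] at reflect
  rw [lconv, ← integral_add_adjacent_intervals (hf.intervalIntegrable_left_half hg ht)
    (hf.intervalIntegrable_right_half hg ht)]
  simp only [halfLconv, reflect, mul_comm (f _)]

theorem lconv_add (hf : ContinuousIntegrable f) (hg : ContinuousIntegrable g)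
    (hh : ContinuousIntegrable h) (ht : 0 < t) :
    lconv f (g + h) t = lconv f g t + lconv f h t := by
  simp only [lconv, Pi.add_apply, mul_add]
  exact integral_add (hf.intervalIntegrable_comp_sub_mul hg ht)
    (hf.intervalIntegrable_comp_sub_mul hh ht)

theorem continuousOn_lconv (hf : ContinuousIntegrable f) (hg : ContinuousIntegrable g) :
    ContinuousOn (lconv f g) (Ioi 0) := by
  refine ContinuousOn.congr (fun t ht => ContinuousAt.continuousWithinAt ?_)
    fun t ht => hf.lconv_eq_halfLconv_add hg ht
  exact (continuousAt_halfLconv hf.continuousOn (hg.intervalIntegrable t ht) ht).add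
    (continuousAt_halfLconv hg.continuousOn (hf.intervalIntegrable t ht) ht)

theorem intervalIntegrable_lconv (hf : ContinuousIntegrable f) (hg : ContinuousIntegrable g)
    (ht : 0 < t) : IntervalIntegrable (lconv f g) volume 0 t := by
  have truncate {φ : ℝ → ℝ} (hφ : ContinuousIntegrable φ) :
      Integrable ((Ioc 0 t).indicator φ) volume :=
    (integrable_indicator_iff measurableSet_Ioc).2 (hφ.intervalIntegrable t ht).1
  have hconv := integrable_posConvolution (truncate hg).integrableOn (truncate hf).integrableOn
    (ContinuousLinearMap.mul ℝ ℝ)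
  rw [intervalIntegrable_iff_integrableOn_Ioc_of_le ht.le]
  refine hconv.integrableOn.congr_fun (fun s hs => ?_) measurableSet_Ioc
  have agree (φ : ℝ → ℝ) : EqOn ((Ioc 0 t).indicator φ) φ (Ioo 0 s) := fun τ hτ =>
    indicator_of_mem (mem_Ioc.2 ⟨hτ.1, hτ.2.le.trans hs.2⟩) φ
  rw [posConvolution, indicator_of_mem (mem_Ioi.2 hs.1), ← lconv_congr (agree f) (agree g) hs.1.le]
  simp only [lconv, ContinuousLinearMap.mul_apply', mul_comm]

protected theorem lconv (hf : ContinuousIntegrable f) (hg : ContinuousIntegrable g) :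
    ContinuousIntegrable (lconv f g) :=
  ⟨hf.continuousOn_lconv hg, fun _ => hf.intervalIntegrable_lconv hg⟩

theorem convolutionExistsAt (hf : ContinuousIntegrable f) (hg : ContinuousIntegrable g) (t : ℝ) :
    ConvolutionExistsAt ((Ioi 0).indicator f) ((Ioi 0).indicator g) t
      (ContinuousLinearMap.mul ℝ ℝ) volume := by
  have hind : (fun τ => (Ioi 0).indicator f τ * (Ioi 0).indicator g (t - τ)) =
      (Ioo 0 t).indicator fun τ => f τ * g (t - τ) := by
    ext τ
    by_cases h0 : 0 < τ <;> by_cases h1 : τ < t <;> simp [indicator, h0, h1]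
  simp only [ConvolutionExistsAt, ContinuousLinearMap.mul_apply', hind,
    integrable_indicator_iff measurableSet_Ioo]
  rcases lt_or_ge 0 t with ht | ht
  · simpa only [mul_comm] using
      (intervalIntegrable_iff_integrableOn_Ioo_of_le ht.le).1
        (hg.intervalIntegrable_comp_sub_mul hf ht)
  · simp only [Ioo_eq_empty ht.not_gt, integrableOn_empty]

theorem lconv_assoc (hf : ContinuousIntegrable f) (hg : ContinuousIntegrable g)
    (hh : ContinuousIntegrable h) (ht : 0 < t) :
    lconv (lconv f g) h t = lconv f (lconv g h) t := by
  have assoc := convolution_assoc (ContinuousLinearMap.mul ℝ ℝ) (ContinuousLinearMap.mul ℝ ℝ)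
    (ContinuousLinearMap.mul ℝ ℝ) (ContinuousLinearMap.mul ℝ ℝ) mul_assoc (x₀ := t)
    hf.aestronglyMeasurable_indicator hg.aestronglyMeasurable_indicator
    hh.aestronglyMeasurable_indicator (.of_forall (hf.convolutionExistsAt hg))
    (.of_forall fun s => by
      simpa only [norm_indicator_eq_indicator_norm] using hg.norm.convolutionExistsAt hh.norm s)
    (by
      simp only [norm_indicator_eq_indicator_norm, ← indicator_lconv]
      exact hf.norm.convolutionExistsAt (hg.norm.lconv hh.norm) t)
  simpa only [← indicator_lconv, indicator_of_mem (mem_Ioi.2 ht)] using assoc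

theorem eqOn_of_lconv_one_eqOn (hf : ContinuousIntegrable f) (hg : ContinuousIntegrable g)
    (hfg : EqOn (lconv 1 f) (lconv 1 g) (Ioi 0)) : EqOn f g (Ioi 0) := fun t ht =>
  (hasDerivAt_lconv_one hf.continuousOn (hf.intervalIntegrable t ht) ht).unique <|
    (hasDerivAt_lconv_one hg.continuousOn (hg.intervalIntegrable t ht) ht).congr_of_eventuallyEq
      (hfg.eventuallyEq_of_mem (Ioi_mem_nhds ht))

theorem lconv_one_eq_of_lconv_eq_one (hK : ContinuousIntegrable K) (hk : ContinuousIntegrable k)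
    (hf : ContinuousIntegrable f) (hg : ContinuousIntegrable g)
    (hKk : EqOn (lconv K k) 1 (Ioi 0)) (hkf : EqOn (lconv k f) (c • 1 + lconv 1 g) (Ioi 0))
    (ht : 0 < t) : lconv 1 f t = lconv 1 (c • K + lconv K g) t :=
  calc lconv 1 f t
    _ = lconv (lconv K k) f t :=
      (lconv_congr (hKk.mono Ioo_subset_Ioi_self) (eqOn_refl ..) ht.le).symm
    _ = lconv K (lconv k f) t := hK.lconv_assoc hk hf ht
    _ = lconv K (c • 1 + lconv 1 g) t :=
      lconv_congr (eqOn_refl ..) (hkf.mono Ioo_subset_Ioi_self) ht.le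
    _ = lconv K (c • 1) t + lconv K (lconv 1 g) t :=
      hK.lconv_add (.const_smul .one c) (.lconv .one hg) ht
    _ = lconv K (c • 1) t + lconv 1 (lconv K g) t := by
      rw [← hK.lconv_assoc .one hg ht, lconv_comm K 1,
        ContinuousIntegrable.one.lconv_assoc hK hg ht]
    _ = lconv 1 (c • K) t + lconv 1 (lconv K g) t := by
      rw [lconv_const_smul, lconv_const_smul, lconv_comm K 1]
    _ = lconv 1 (c • K + lconv K g) t :=
      (ContinuousIntegrable.one.lconv_add (hK.const_smul c) (hK.lconv hg) ht).symm

theorem lconv_deriv_lconv_of_lconv_eq_one (hK : ContinuousIntegrable K)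
    (hk : ContinuousIntegrable k) (hf : ContinuousIntegrable f) (hKk : EqOn (lconv K k) 1 (Ioi 0))
    (hdiff : ∀ s > (0 : ℝ), DifferentiableAt ℝ (lconv k f) s)
    (hlim : Tendsto (lconv k f) (𝓝[>] 0) (𝓝 c))
    (hder : ContinuousIntegrable (deriv (lconv k f))) (ht : 0 < t) :
    lconv K (deriv (lconv k f)) t = f t - c * K t := by
  have hkf : EqOn (lconv k f) (c • 1 + lconv 1 (deriv (lconv k f))) (Ioi 0) := fun s hs => by
    simp [lconv_one_deriv hdiff (hder.intervalIntegrable s hs) hlim hs]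
  have hfK : f t = c * K t + lconv K (deriv (lconv k f)) t :=
    hf.eqOn_of_lconv_one_eqOn ((hK.const_smul c).add (hK.lconv hder))
      (fun s hs => hK.lconv_one_eq_of_lconv_eq_one hk hf hder hKk hkf hs) ht
  exact eq_sub_of_add_eq' hfK.symm

end ContinuousIntegrable

theorem second_fundamental_theorem_1L_general {κ k₁ k₂ f : ℝ → ℝ} {c : ℝ}
    (hκ : ContinuousIntegrable κ) (hk₁ : ContinuousIntegrable k₁) (hk₂ : ContinuousIntegrable k₂)
    (hker : ∀ t > (0 : ℝ), lconv κ (lconv k₁ k₂) t = 1) (hf : ContinuousIntegrable f)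
    (hdiff : ∀ t > (0 : ℝ), DifferentiableAt ℝ (lconv k₂ f) t)
    (hlim : Tendsto (lconv k₂ f) (𝓝[>] 0) (𝓝 c))
    (hder : ContinuousIntegrable (deriv (lconv k₂ f))) :
    ∀ t > (0 : ℝ),
      lconv κ (lconv k₁ (deriv (lconv k₂ f))) t = f t - c * lconv k₁ κ t := by
  intro t ht
  have sonine : EqOn (lconv (lconv κ k₁) k₂) 1 (Ioi 0) := fun s hs =>
    (hκ.lconv_assoc hk₁ hk₂ hs).trans (hker s hs)
  rw [← hκ.lconv_assoc hk₁ hder ht, lconv_comm k₁ κ]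
  exact (hκ.lconv hk₁).lconv_deriv_lconv_of_lconv_eq_one hk₂ hf sonine hdiff hlim hder ht

/-- Second fundamental theorem of FC for the 1st level GFD: for
`(κ, k₁, k₂) ∈ L₁¹` and `f ∈ C¹_{-1,(k₂)}(0,∞)` (i.e. `f ∈ C_{-1}(0,∞)`, `k₂ * f`
is differentiable on `(0,∞)` with finite limit `c = (k₂ * f)(0)` at `0+` and
`d/dt (k₂ * f) ∈ C_{-1}(0,∞)`), one has
`(κ * ( 1L D_{(k₁,k₂)} f))(t) = f(t) − (k₂ * f)(0) · (k₁ * κ)(t)` for all `t > 0`. -/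
theorem second_fundamental_theorem_1L (κ k₁ k₂ f : ℝ → ℝ) (c : ℝ)
    (hker : FirstLevelKernels κ k₁ k₂) (hf : CMinusOne f)
    (hdiff : ∀ t > (0:ℝ), DifferentiableAt ℝ (lconv k₂ f) t)
    (hlim : Tendsto (lconv k₂ f) (nhdsWithin 0 (Set.Ioi 0)) (nhds c))
    (hder : CMinusOne (deriv (lconv k₂ f))) :
    ∀ t > (0:ℝ),
      lconv κ (lconv k₁ (deriv (lconv k₂ f))) t = f t - c * lconv k₁ κ t :=
  let ⟨hκ, hk₁, hk₂, hone⟩ := hker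
  second_fundamental_theorem_1L_general hκ.continuousIntegrable hk₁.continuousIntegrable
    hk₂.continuousIntegrable hone hf.continuousIntegrable hdiff hlim hder.continuousIntegrable
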